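/- Let p be the causal-fork empirical model given by the explicit table in the context. Then: (1) p satisfies the causality equations of the order A ∨ (C⇝B) (for each down-closed event set T ∈ {{A},{C},{A,C},{B,C}}, the marginal of p obtained by summing over the outputs of the events outside T depends only on the inputs of the events in T); (2) p likewise satisfies the causality equations of the order B ∨ (C⇝A) (down-closed sets T ∈ {{B},{C},{B,C},{A,C}}); and yet (3) the no-signalling fraction of p is zero: the only function v : ({0,1}³) → ({0,1}³ → ℝ) with 0 ≤ v i o ≤ p i o for all i, o, with all row sums ∑_o v i o equal across inputs i, and satisfying the no-signalling equations, is v = 0. In particular p lies in the intersection of the two causaltopes but not in the no-signalling polytope, so the intersection of two causaltopes need not be the causaltope of the meet of the underlying spaces. -/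

import Mathlib

/-- The causal-fork empirical model: inputs `(i_A, i_B, i_C)`, outputs `(o_A, o_B, o_C)`.
Row 000 is supported on outputs with `o_A = o_B` (weight 1/4 each), row 001 on outputs
with `o_A ≠ o_B`, rows 110 and 111 on outputs of even parity `o_A ⊕ o_B ⊕ o_C = 0`,
and rows 010, 011, 100, 101 are uniform (all entries 1/8). -/
noncomputable def causalFork : Bool × Bool × Bool → Bool × Bool × Bool → ℝ := fun i o =>
  match i, o with
  | (false, false, false), (x, y, _) => if x = y then 1/4 else 0
  | (false, false, true), (x, y, _) => if x = y then 0 else 1/4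
  | (false, true, _), _ => 1/8
  | (true, false, _), _ => 1/8
  | (true, true, _), (x, y, z) => if xor x (xor y z) = false then 1/4 else 0

/-- The causal-fork model (1) satisfies the causality equations of the
order `A ∨ (C ⇝ B)` (marginal constraints for the lowersets `{A}`, `{C}`, `{A,C}`,
`{B,C}`), (2) satisfies the causality equations of the order `B ∨ (C ⇝ A)` (lowersets
`{B}`, `{C}`, `{B,C}`, `{A,C}`), and yet (3) has no-signalling fraction zero: the only
componentwise-dominated, quasi-normalised, no-signalling `v ≤ p` is `v = 0`.  Hence the
intersection of the two causaltopes is not the causaltope of the meet of the spaces. -/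
theorem causalFork_in_two_causaltopes_but_nosignalling_fraction_zero :
    -- (1) causality equations of A ∨ (C ⇝ B)
    ((∀ iA iB iC iB' iC' oA : Bool,
        ∑ oB : Bool, ∑ oC : Bool, causalFork (iA, iB, iC) (oA, oB, oC)
          = ∑ oB : Bool, ∑ oC : Bool, causalFork (iA, iB', iC') (oA, oB, oC)) ∧
      (∀ iA iB iA' iB' iC oC : Bool,
        ∑ oA : Bool, ∑ oB : Bool, causalFork (iA, iB, iC) (oA, oB, oC)
          = ∑ oA : Bool, ∑ oB : Bool, causalFork (iA', iB', iC) (oA, oB, oC)) ∧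
      (∀ iA iB iB' iC oA oC : Bool,
        ∑ oB : Bool, causalFork (iA, iB, iC) (oA, oB, oC)
          = ∑ oB : Bool, causalFork (iA, iB', iC) (oA, oB, oC)) ∧
      (∀ iA iA' iB iC oB oC : Bool,
        ∑ oA : Bool, causalFork (iA, iB, iC) (oA, oB, oC)
          = ∑ oA : Bool, causalFork (iA', iB, iC) (oA, oB, oC))) ∧
    -- (2) causality equations of B ∨ (C ⇝ A)
    ((∀ iA iB iC iA' iC' oB : Bool,
        ∑ oA : Bool, ∑ oC : Bool, causalFork (iA, iB, iC) (oA, oB, oC)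
          = ∑ oA : Bool, ∑ oC : Bool, causalFork (iA', iB, iC') (oA, oB, oC)) ∧
      (∀ iA iB iA' iB' iC oC : Bool,
        ∑ oA : Bool, ∑ oB : Bool, causalFork (iA, iB, iC) (oA, oB, oC)
          = ∑ oA : Bool, ∑ oB : Bool, causalFork (iA', iB', iC) (oA, oB, oC)) ∧
      (∀ iA iA' iB iC oB oC : Bool,
        ∑ oA : Bool, causalFork (iA, iB, iC) (oA, oB, oC)
          = ∑ oA : Bool, causalFork (iA', iB, iC) (oA, oB, oC)) ∧
      (∀ iA iB iB' iC oA oC : Bool,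
        ∑ oB : Bool, causalFork (iA, iB, iC) (oA, oB, oC)
          = ∑ oB : Bool, causalFork (iA, iB', iC) (oA, oB, oC))) ∧
    -- (3) no-signalling fraction zero
    (∀ v : Bool × Bool × Bool → Bool × Bool × Bool → ℝ,
      (∀ i o, 0 ≤ v i o ∧ v i o ≤ causalFork i o) →
      (∀ i i' : Bool × Bool × Bool,
        ∑ o : Bool × Bool × Bool, v i o = ∑ o : Bool × Bool × Bool, v i' o) →
      (∀ a a' b c y z : Bool,
        ∑ x : Bool, v (a, b, c) (x, y, z) = ∑ x : Bool, v (a', b, c) (x, y, z)) →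
      (∀ a b b' c x z : Bool,
        ∑ y : Bool, v (a, b, c) (x, y, z) = ∑ y : Bool, v (a, b', c) (x, y, z)) →
      (∀ a b c c' x y : Bool,
        ∑ z : Bool, v (a, b, c) (x, y, z) = ∑ z : Bool, v (a, b, c') (x, y, z)) →
      v = 0) := by
  refine ⟨⟨?_, ?_, ?_, ?_⟩, ⟨?_, ?_, ?_, ?_⟩, ?_⟩
  · intro a b c b' c' x
    cases a <;> cases b <;> cases c <;> cases b' <;> cases c' <;> cases x <;>
      simp [causalFork] <;> norm_num
  · intro a b a' b' c x
    cases a <;> cases b <;> cases c <;> cases b' <;> cases a' <;> cases x <;>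
      simp [causalFork] <;> norm_num
  · intro a b b' c x z
    cases a <;> cases b <;> cases c <;> cases b' <;> cases z <;> cases x <;>
      simp [causalFork] <;> norm_num
  · intro a a' b c x z
    cases a <;> cases b <;> cases c <;> cases a' <;> cases z <;> cases x <;>
      simp [causalFork] <;> norm_num
  · intro a b c a' c' x
    cases a <;> cases b <;> cases c <;> cases a' <;> cases c' <;> cases x <;>
      simp [causalFork] <;> norm_num
  · intro a b a' b' c x
    cases a <;> cases b <;> cases c <;> cases b' <;> cases a' <;> cases x <;>
      simp [causalFork] <;> norm_num
  · intro a a' b c x z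
    cases a <;> cases b <;> cases c <;> cases a' <;> cases z <;> cases x <;>
      simp [causalFork] <;> norm_num
  · intro a b b' c x z
    cases a <;> cases b <;> cases c <;> cases b' <;> cases z <;> cases x <;>
      simp [causalFork] <;> norm_num
  · intro v hv hn _ _ hC
    have h0 : ∀ x y z, v (false, false, false) (x, y, z) = 0 := by
      intro x y z
      have h1 := hv (false, false, false) (x, y, z)
      by_cases hxy : x = y
      · have e := hC false false false true x y
        have t := hv (false, false, true) (x, y, true)
        have f := hv (false, false, true) (x, y, false)
        have t1 := hv (false, false, false) (x, y, true)
        have f1 := hv (false, false, false) (x, y, false)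
        simp only [causalFork, hxy, if_true] at t f
        simp only [Fintype.sum_bool, hxy] at e
        subst hxy
        cases z <;> linarith [t.1, t.2, f.1, f.2, t1.1, f1.1]
      · simp only [causalFork, hxy, if_false] at h1
        exact le_antisymm h1.2 h1.1
    have hs : ∀ i, ∑ o : Bool × Bool × Bool, v i o = 0 := by
      intro i
      rw [hn i (false, false, false)]
      exact Finset.sum_eq_zero fun o _ => h0 o.1 o.2.1 o.2.2
    funext i o
    exact (Finset.sum_eq_zero_iff_of_nonneg fun o _ => (hv i o).1).1 (hs i) o (Finset.mem_univ o)
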